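/- arXiv:1704.01817 — 2 statements merged into one kernel-verified Lean document; each statement's English description precedes it below -/
import Mathlib

section
/- Generalized Leibniz formula, second form (Theorem 1.1, formula (Rfg2)): Let n ≥ 1 and let 𝐩 ∈ ℝ[x₁,…,xₙ]. Let W(𝐩) be the linear span of all partial derivatives ∂^α𝐩 for multi-indices α ∈ ℕⁿ (including α = 0), let ρ = dim W(𝐩), and let 𝐩₁,…,𝐩_ρ be a basis of W(𝐩) orthonormal with respect to the Fischer inner product. Then for all smooth functions f, g : ℝⁿ → ℝ one has 𝐩(∂)(f·g) = Σ_{i=1}^{ρ} Σ_{j=1}^{ρ} (𝐩, 𝐩ᵢ·𝐩ⱼ)_F · (𝐩ᵢ(∂)f)·(𝐩ⱼ(∂)g) pointwise on ℝⁿ. -/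
noncomputable section

open MvPolynomial

/-- Partial derivative of a function on `ℝⁿ` in the `i`-th coordinate direction. -/
def pderivFun {n : ℕ} (i : Fin n) (f : (Fin n → ℝ) → ℝ) : (Fin n → ℝ) → ℝ :=
  fun x => fderiv ℝ f x (Pi.single i 1)

/-- `∂^m`, the iterated partial derivative attached to the multi-index `m`. -/
def multiDerivFun {n : ℕ} (m : Fin n →₀ ℕ) (f : (Fin n → ℝ) → ℝ) : (Fin n → ℝ) → ℝ :=
  List.foldr (fun i g => (pderivFun i)^[m i] g) f (List.finRange n)

/-- `p(∂)`, the constant-coefficient differential operator attached to the polynomial `p`. -/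
def polDeriv {n : ℕ} (p : MvPolynomial (Fin n) ℝ) (f : (Fin n → ℝ) → ℝ) : (Fin n → ℝ) → ℝ :=
  fun x => ∑ m ∈ p.support, p.coeff m * multiDerivFun m f x

/-- `∂^m` acting on polynomials. -/
def polyMultiDeriv {n : ℕ} (m : Fin n →₀ ℕ) (p : MvPolynomial (Fin n) ℝ) :
    MvPolynomial (Fin n) ℝ :=
  List.foldr (fun i q => (fun r => MvPolynomial.pderiv i r)^[m i] q) p (List.finRange n)

/-- `q(∂)p`, as a polynomial. -/
def polyApply {n : ℕ} (q p : MvPolynomial (Fin n) ℝ) : MvPolynomial (Fin n) ℝ :=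
  ∑ m ∈ q.support, q.coeff m • polyMultiDeriv m p

/-- The Fischer inner product `(p,q)_F = (p(∂)q)(0)`. -/
def fischer {n : ℕ} (p q : MvPolynomial (Fin n) ℝ) : ℝ :=
  polDeriv p (fun x => MvPolynomial.eval x q) 0

/-- `W(p)`, the linear span of all partial derivatives `∂^α p` (including `p` itself). -/
def Wspace {n : ℕ} (p : MvPolynomial (Fin n) ℝ) : Submodule ℝ (MvPolynomial (Fin n) ℝ) :=
  Submodule.span ℝ (Set.range fun m : Fin n →₀ ℕ => polyMultiDeriv m p)

/-!
At the origin, `[p(∂), xᵢ] = (∂ᵢp)(∂)` gives `p(∂)(q·f)(0) = (q(∂)p)(∂)f(0)` for every polynomial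
`q`: multiplication by `q` is adjoint to differentiation by `q`. Since `p(∂)(f·g)(0)` involves only
finitely many derivatives of `g` at the origin, the smooth function `g` can be replaced by a Taylor
polynomial `q`, so that `p(∂)(f·g)(0) = w(∂)f(0)` with `w = q(∂)p ∈ W(p)` not depending on `f`.
Expanding `w` in an orthonormal basis `bᵢ` gives
`p(∂)(f·g)(0) = ∑ᵢ bᵢ(∂)f(0) · p(∂)(bᵢ·g)(0)`. Applying this once to each factor yields the formula
at the origin, and translation invariance yields it everywhere.
-/

section

open scoped ContDiff Nat

section MultiIndex

variable {ι A : Type*} {D : ι → A → A}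

theorem multiIndex_induction {P : (ι →₀ ℕ) → Prop} (zero : P 0)
    (add_single : ∀ m i, P m → P (m + Finsupp.single i 1)) (m : ι →₀ ℕ) : P m := by
  classical
  induction m using Finsupp.induction with
  | zero => exact zero
  | single_add i k m _ hk ih =>
    clear hk
    induction k with
    | zero => simpa using ih
    | succ k ihk =>
      have h := add_single _ i ihk
      rwa [add_right_comm, ← Finsupp.single_add] at h

theorem prod_factorial_add_single [Fintype ι] (m : ι →₀ ℕ) (i : ι) :
    ∏ j, ((m + Finsupp.single i 1 : ι →₀ ℕ) j)! = (m i + 1) * ∏ j, (m j)! := by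
  classical
  rw [← Finset.mul_prod_erase _ _ (Finset.mem_univ i),
    ← Finset.mul_prod_erase _ (fun j => (m j)!) (Finset.mem_univ i), ← mul_assoc,
    ← Nat.factorial_succ]
  congr 1
  · simp
  · refine Finset.prod_congr rfl fun j hj => ?_
    simp [Finsupp.single_eq_of_ne (Finset.ne_of_mem_erase hj)]

theorem foldr_iterate_apply_comm (hD : ∀ i j, Function.Commute (D i) (D j)) (m : ι →₀ ℕ) (j : ι)
    (l : List ι) (a : A) :
    l.foldr (fun i => (D i)^[m i]) (D j a) = D j (l.foldr (fun i => (D i)^[m i]) a) :=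
  List.foldr_hom (D j) fun i b => (hD i j).iterate_left (m i) b

theorem foldr_iterate_add_single (hD : ∀ i j, Function.Commute (D i) (D j)) (m : ι →₀ ℕ) {j : ι}
    {l : List ι} (hl : l.Nodup) (hj : j ∈ l) (a : A) :
    l.foldr (fun i => (D i)^[(m + Finsupp.single j 1 : ι →₀ ℕ) i]) a =
      l.foldr (fun i => (D i)^[m i]) (D j a) := by
  induction l with
  | nil => simp at hj
  | cons i l ih =>
    obtain ⟨hil, hl'⟩ := List.nodup_cons.1 hl
    simp only [List.foldr_cons]
    obtain rfl | hji := eq_or_ne j i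
    · have htail : l.foldr (fun i => (D i)^[(m + Finsupp.single j 1 : ι →₀ ℕ) i]) a =
          l.foldr (fun i => (D i)^[m i]) a := by
        refine List.foldr_ext _ _ _ fun i hi b => ?_
        have hij : i ≠ j := fun h => hil (h ▸ hi)
        simp [Finsupp.single_eq_of_ne hij]
      rw [htail, foldr_iterate_apply_comm hD, Finsupp.add_apply, Finsupp.single_eq_same,
        Function.iterate_succ_apply]
    · rw [ih hl' (List.mem_of_ne_of_mem hji hj)]
      simp [Finsupp.single_eq_of_ne hji.symm]

end MultiIndex

section PolynomialDerivatives

theorem pderiv_X_eq_C {σ R : Type*} [CommSemiring R] [DecidableEq σ] (i j : σ) :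
    pderiv i (X j : MvPolynomial σ R) = C ((Pi.single i 1 : σ → R) j) := by
  simp only [pderiv_X, Pi.single_apply, apply_ite C, C_1, C_0]

theorem pderiv_commute {σ R : Type*} [CommRing R] (i j : σ) :
    Function.Commute (fun r : MvPolynomial σ R => pderiv i r) (fun r => pderiv j r) := by
  classical
  have hbracket : ⁅(pderiv i : Derivation R (MvPolynomial σ R) (MvPolynomial σ R)),
      (pderiv j : Derivation R (MvPolynomial σ R) (MvPolynomial σ R))⁆ = 0 := by
    ext k : 1
    simp only [Derivation.commutator_apply, pderiv_X_eq_C, pderiv_C, sub_zero, Derivation.coe_zero,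
      Pi.zero_apply]
  intro r
  simpa [Derivation.commutator_apply, sub_eq_zero] using DFunLike.congr_fun hbracket r

end PolynomialDerivatives

variable {n : ℕ} {f g h : (Fin n → ℝ) → ℝ}

section PartialDerivatives

theorem contDiff_pderivFun (i : Fin n) (hf : ContDiff ℝ ∞ f) : ContDiff ℝ ∞ (pderivFun i f) :=
  (hf.fderiv_right (m := ∞) (by norm_cast)).clm_apply contDiff_const

theorem pderivFun_comm (i j : Fin n) (hf : ContDiff ℝ 2 f) :
    pderivFun i (pderivFun j f) = pderivFun j (pderivFun i f) := by
  have hdf : Differentiable ℝ (fderiv ℝ f) :=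
    (hf.fderiv_right (m := 1) one_add_one_eq_two.le).differentiable one_ne_zero
  have second_deriv (u v x : Fin n → ℝ) :
      fderiv ℝ (fun y => fderiv ℝ f y v) x u = fderiv ℝ (fderiv ℝ f) x u v := by
    simp [fderiv_clm_apply (hdf x) (differentiableAt_const v)]
  funext x
  have hsymm : IsSymmSndFDerivAt ℝ f x := hf.contDiffAt.isSymmSndFDerivAt (by simp)
  calc pderivFun i (pderivFun j f) x
      = fderiv ℝ (fderiv ℝ f) x (Pi.single i 1) (Pi.single j 1) := second_deriv _ _ x
    _ = fderiv ℝ (fderiv ℝ f) x (Pi.single j 1) (Pi.single i 1) := hsymm _ _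
    _ = pderivFun j (pderivFun i f) x := (second_deriv _ _ x).symm

theorem pderivFun_fun_add (i : Fin n) (hf : Differentiable ℝ f) (hg : Differentiable ℝ g) :
    pderivFun i (fun y => f y + g y) = fun y => pderivFun i f y + pderivFun i g y := by
  funext y
  simp [pderivFun, fderiv_fun_add (hf y) (hg y)]

theorem pderivFun_fun_mul (i : Fin n) (hf : Differentiable ℝ f) (hg : Differentiable ℝ g) :
    pderivFun i (fun y => f y * g y) = fun y => pderivFun i f y * g y + f y * pderivFun i g y := by
  funext y
  simp only [pderivFun, fderiv_fun_mul (hf y) (hg y), add_apply, smul_apply, smul_eq_mul]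
  ring

theorem pderivFun_const (i : Fin n) (c : ℝ) :
    pderivFun i (fun _ : Fin n → ℝ => c) = fun _ => 0 := by
  funext y
  simp [pderivFun]

theorem pderivFun_fun_const_mul (i : Fin n) (c : ℝ) (hf : Differentiable ℝ f) :
    pderivFun i (fun y => c * f y) = fun y => c * pderivFun i f y := by
  rw [pderivFun_fun_mul i (differentiable_const c) hf, pderivFun_const]
  simp only [zero_mul, zero_add]

theorem pderivFun_proj (i j : Fin n) :
    pderivFun i (fun y => y j) = fun _ => (Pi.single i 1 : Fin n → ℝ) j := by
  funext y
  simp [pderivFun, fderiv_apply]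

theorem pderivFun_comp_add_left (i : Fin n) (f : (Fin n → ℝ) → ℝ) (x : Fin n → ℝ) :
    pderivFun i (fun y => f (x + y)) = fun y => pderivFun i f (x + y) := by
  funext y
  simp [pderivFun, fderiv_comp_add_left]

theorem contDiff_eval (q : MvPolynomial (Fin n) ℝ) : ContDiff ℝ ∞ (fun x => eval x q) :=
  (AnalyticOnNhd.eval_mvPolynomial q).contDiff

theorem pderivFun_eval (i : Fin n) (q : MvPolynomial (Fin n) ℝ) :
    pderivFun i (fun x => eval x q) = fun x => eval x (pderiv i q) := by
  have hdiff (r : MvPolynomial (Fin n) ℝ) : Differentiable ℝ (fun x => eval x r) :=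
    (contDiff_eval r).differentiable (by simp)
  induction q using MvPolynomial.induction_on with
  | C c => simp [pderivFun_const]
  | add q r hq hr => simp only [map_add, pderivFun_fun_add i (hdiff q) (hdiff r), hq, hr]
  | mul_X q j hq =>
    simp only [map_mul, eval_X, pderivFun_fun_mul i (hdiff q) (differentiable_apply j), hq,
      pderivFun_proj, pderiv_mul, map_add, pderiv_X_eq_C, eval_C]

end PartialDerivatives

section IteratedDerivatives

theorem multiDerivFun_zero (f : (Fin n → ℝ) → ℝ) : multiDerivFun 0 f = f :=
  List.foldr_fixed' (fun _ => rfl) _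

theorem multiDerivFun_add_single (m : Fin n →₀ ℕ) (i : Fin n) (hf : ContDiff ℝ ∞ f) :
    multiDerivFun (m + Finsupp.single i 1) f = multiDerivFun m (pderivFun i f) := by
  let D (i : Fin n) : {f : (Fin n → ℝ) → ℝ // ContDiff ℝ ∞ f} → {f // ContDiff ℝ ∞ f} :=
    Subtype.map (pderivFun i) fun _ => contDiff_pderivFun i
  have hD (i j : Fin n) : Function.Commute (D i) (D j) :=
    fun f => Subtype.ext (pderivFun_comm i j (f.2.of_le (by norm_cast)))
  have coe_foldr (m : Fin n →₀ ℕ) (f : {f : (Fin n → ℝ) → ℝ // ContDiff ℝ ∞ f}) :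
      multiDerivFun m f = ((List.finRange n).foldr (fun i => (D i)^[m i]) f).1 :=
    List.foldr_hom Subtype.val fun i f =>
      ((show Function.Semiconj Subtype.val (D i) (pderivFun i) from
        fun _ => rfl).iterate_right (m i) f).symm
  rw [coe_foldr _ ⟨f, hf⟩, foldr_iterate_add_single hD m (List.nodup_finRange n)
    (List.mem_finRange i), ← coe_foldr]
  rfl

theorem polyMultiDeriv_zero (p : MvPolynomial (Fin n) ℝ) : polyMultiDeriv 0 p = p :=
  List.foldr_fixed' (fun _ => rfl) _

theorem polyMultiDeriv_add_single (m : Fin n →₀ ℕ) (i : Fin n) (p : MvPolynomial (Fin n) ℝ) :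
    polyMultiDeriv (m + Finsupp.single i 1) p = polyMultiDeriv m (pderiv i p) :=
  foldr_iterate_add_single pderiv_commute m (List.nodup_finRange n) (List.mem_finRange i) p

theorem multiDerivFun_fun_add (m : Fin n →₀ ℕ) (hf : ContDiff ℝ ∞ f) (hg : ContDiff ℝ ∞ g) :
    multiDerivFun m (fun y => f y + g y) =
      fun y => multiDerivFun m f y + multiDerivFun m g y := by
  induction m using multiIndex_induction generalizing f g with
  | zero => simp only [multiDerivFun_zero]
  | add_single m i ih =>
    rw [multiDerivFun_add_single m i (hf.add hg), multiDerivFun_add_single m i hf,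
      multiDerivFun_add_single m i hg,
      pderivFun_fun_add i (hf.differentiable (by simp)) (hg.differentiable (by simp)),
      ih (contDiff_pderivFun i hf) (contDiff_pderivFun i hg)]

theorem multiDerivFun_fun_const_mul (m : Fin n →₀ ℕ) (c : ℝ) (hf : ContDiff ℝ ∞ f) :
    multiDerivFun m (fun y => c * f y) = fun y => c * multiDerivFun m f y := by
  induction m using multiIndex_induction generalizing f with
  | zero => simp only [multiDerivFun_zero]
  | add_single m i ih =>
    rw [multiDerivFun_add_single m i (contDiff_const.mul hf), multiDerivFun_add_single m i hf,
      pderivFun_fun_const_mul i c (hf.differentiable (by simp)), ih (contDiff_pderivFun i hf)]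

theorem multiDerivFun_comp_add_left (m : Fin n →₀ ℕ) (hf : ContDiff ℝ ∞ f) (x : Fin n → ℝ) :
    multiDerivFun m (fun y => f (x + y)) = fun y => multiDerivFun m f (x + y) := by
  induction m using multiIndex_induction generalizing f with
  | zero => simp only [multiDerivFun_zero]
  | add_single m i ih =>
    rw [multiDerivFun_add_single m i hf,
      multiDerivFun_add_single (f := fun y => f (x + y)) m i
        (hf.comp (contDiff_const.add contDiff_id)),
      pderivFun_comp_add_left, ih (contDiff_pderivFun i hf)]

theorem multiDerivFun_eval_zero (m : Fin n →₀ ℕ) (q : MvPolynomial (Fin n) ℝ) :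
    multiDerivFun m (fun y => eval y q) 0 = (∏ i, (m i)! : ℕ) * coeff m q := by
  induction m using multiIndex_induction generalizing q with
  | zero => simp [multiDerivFun_zero, constantCoeff_eq]
  | add_single m i ih =>
    rw [multiDerivFun_add_single m i (contDiff_eval q), pderivFun_eval, ih, coeff_pderiv,
      prod_factorial_add_single]
    push_cast
    ring

theorem exists_multiDerivFun_eval_zero_eq (s : Finset (Fin n →₀ ℕ)) (c : (Fin n →₀ ℕ) → ℝ) :
    ∃ q : MvPolynomial (Fin n) ℝ, ∀ m ∈ s, multiDerivFun m (fun y => eval y q) 0 = c m := by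
  refine ⟨∑ m ∈ s, monomial m (c m / (∏ i, (m i)! : ℕ)), fun m hm => ?_⟩
  have hfact : ((∏ i, (m i)! : ℕ) : ℝ) ≠ 0 := by
    exact_mod_cast (Nat.prod_factorial_pos Finset.univ m).ne'
  rw [multiDerivFun_eval_zero]
  simp only [coeff_sum, coeff_monomial, Finset.sum_ite_eq', hm, if_true]
  exact mul_div_cancel₀ _ hfact

theorem multiDerivFun_fun_mul_congr (m : Fin n →₀ ℕ) (hf : ContDiff ℝ ∞ f) (hg : ContDiff ℝ ∞ g)
    (hh : ContDiff ℝ ∞ h) {x : Fin n → ℝ}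
    (hgh : ∀ k ≤ m, multiDerivFun k g x = multiDerivFun k h x) :
    multiDerivFun m (fun y => f y * g y) x = multiDerivFun m (fun y => f y * h y) x := by
  induction m using multiIndex_induction generalizing f g h with
  | zero =>
    have h0 := hgh 0 le_rfl
    simp only [multiDerivFun_zero] at h0 ⊢
    rw [h0]
  | add_single m i ih =>
    have hf' := contDiff_pderivFun i hf
    have product_rule {u : (Fin n → ℝ) → ℝ} (hu : ContDiff ℝ ∞ u) :
        multiDerivFun (m + Finsupp.single i 1) (fun y => f y * u y) x =
          multiDerivFun m (fun y => pderivFun i f y * u y) x +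
            multiDerivFun m (fun y => f y * pderivFun i u y) x := by
      rw [multiDerivFun_add_single m i (hf.mul hu),
        pderivFun_fun_mul i (hf.differentiable (by simp)) (hu.differentiable (by simp)),
        multiDerivFun_fun_add m (hf'.mul hu) (hf.mul (contDiff_pderivFun i hu))]
    rw [product_rule hg, product_rule hh,
      ih hf' hg hh fun k hk => hgh k (hk.trans le_self_add),
      ih hf (contDiff_pderivFun i hg) (contDiff_pderivFun i hh) fun k hk => ?_]
    rw [← multiDerivFun_add_single k i hg, ← multiDerivFun_add_single k i hh]
    exact hgh _ (add_le_add_left hk _)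

end IteratedDerivatives

section MonomialBasis

variable {σ R M : Type*} [CommSemiring R] [AddCommMonoid M] [Module R M]

theorem basisMonomials_constr_apply (v : (σ →₀ ℕ) → M) (p : MvPolynomial σ R) :
    (basisMonomials σ R).constr R v p = ∑ m ∈ p.support, p.coeff m • v m := by
  rw [Module.Basis.constr_apply]
  rfl

theorem basisMonomials_constr_monomial (v : (σ →₀ ℕ) → M) (m : σ →₀ ℕ) (c : R) :
    (basisMonomials σ R).constr R v (monomial m c) = c • v m := by
  rw [← Module.Basis.constr_basis (basisMonomials σ R) R v m, ← map_smul, coe_basisMonomials,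
    smul_monomial, smul_eq_mul, mul_one]

theorem basisMonomials_constr_C (v : (σ →₀ ℕ) → M) (c : R) :
    (basisMonomials σ R).constr R v (C c) = c • v 0 :=
  basisMonomials_constr_monomial v 0 c

theorem basisMonomials_constr_mul_X (v : (σ →₀ ℕ) → M) (p : MvPolynomial σ R) (i : σ) :
    (basisMonomials σ R).constr R v (p * X i) =
      (basisMonomials σ R).constr R (fun m => v (m + Finsupp.single i 1)) p := by
  induction p using MvPolynomial.induction_on' with
  | monomial m c => rw [X, monomial_mul, mul_one, basisMonomials_constr_monomial,
      basisMonomials_constr_monomial]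
  | add p q hp hq => rw [add_mul, map_add, map_add, hp, hq]

end MonomialBasis

section DifferentialOperators

variable (p q : MvPolynomial (Fin n) ℝ)

theorem polDeriv_eq_constr (f : (Fin n → ℝ) → ℝ) (x : Fin n → ℝ) :
    polDeriv p f x = (basisMonomials (Fin n) ℝ).constr ℝ (fun m => multiDerivFun m f x) p :=
  (basisMonomials_constr_apply _ p).symm

theorem polDeriv_add (f : (Fin n → ℝ) → ℝ) (x : Fin n → ℝ) :
    polDeriv (p + q) f x = polDeriv p f x + polDeriv q f x := by
  simp only [polDeriv_eq_constr, map_add]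

theorem polDeriv_smul (c : ℝ) (f : (Fin n → ℝ) → ℝ) (x : Fin n → ℝ) :
    polDeriv (c • p) f x = c * polDeriv p f x := by
  simp only [polDeriv_eq_constr, map_smul, smul_eq_mul]

theorem polDeriv_sum_smul {ι : Type*} (s : Finset ι) (c : ι → ℝ)
    (b : ι → MvPolynomial (Fin n) ℝ) (f : (Fin n → ℝ) → ℝ) (x : Fin n → ℝ) :
    polDeriv (∑ i ∈ s, c i • b i) f x = ∑ i ∈ s, c i * polDeriv (b i) f x := by
  simp only [polDeriv_eq_constr, map_sum, map_smul, smul_eq_mul]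

theorem polDeriv_C (c : ℝ) (f : (Fin n → ℝ) → ℝ) (x : Fin n → ℝ) :
    polDeriv (C c) f x = c * f x := by
  rw [polDeriv_eq_constr, basisMonomials_constr_C, multiDerivFun_zero, smul_eq_mul]

theorem polDeriv_mul_X (i : Fin n) (hf : ContDiff ℝ ∞ f) (x : Fin n → ℝ) :
    polDeriv (p * X i) f x = polDeriv p (pderivFun i f) x := by
  simp only [polDeriv_eq_constr, basisMonomials_constr_mul_X, multiDerivFun_add_single _ i hf]

theorem polDeriv_fun_add (hf : ContDiff ℝ ∞ f) (hg : ContDiff ℝ ∞ g) (x : Fin n → ℝ) :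
    polDeriv p (fun y => f y + g y) x = polDeriv p f x + polDeriv p g x := by
  simp only [polDeriv, multiDerivFun_fun_add _ hf hg, mul_add, Finset.sum_add_distrib]

theorem polDeriv_fun_const_mul (c : ℝ) (hf : ContDiff ℝ ∞ f) (x : Fin n → ℝ) :
    polDeriv p (fun y => c * f y) x = c * polDeriv p f x := by
  simp only [polDeriv, multiDerivFun_fun_const_mul _ c hf, Finset.mul_sum, mul_left_comm]

theorem polDeriv_comp_add_left (hf : ContDiff ℝ ∞ f) (x y : Fin n → ℝ) :
    polDeriv p (fun z => f (x + z)) y = polDeriv p f (x + y) := by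
  simp only [polDeriv, multiDerivFun_comp_add_left _ hf]

theorem polDeriv_proj_mul (i : Fin n) (hf : ContDiff ℝ ∞ f) (x : Fin n → ℝ) :
    polDeriv p (fun y => y i * f y) x = x i * polDeriv p f x + polDeriv (pderiv i p) f x := by
  induction p using MvPolynomial.induction_on generalizing f with
  | C c =>
    rw [polDeriv_C, polDeriv_C, pderiv_C, ← C_0, polDeriv_C]
    ring
  | add p q hp hq =>
    rw [polDeriv_add, polDeriv_add, map_add, polDeriv_add, hp hf, hq hf]
    ring
  | mul_X p j hp =>
    have hproj : ContDiff ℝ ∞ fun y : Fin n → ℝ => y i := contDiff_apply ℝ ℝ i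
    have hf' : ContDiff ℝ ∞ (pderivFun j f) := contDiff_pderivFun j hf
    rw [polDeriv_mul_X _ j (hproj.mul hf), polDeriv_mul_X _ j hf,
      pderivFun_fun_mul j (hproj.differentiable (by simp)) (hf.differentiable (by simp)),
      pderivFun_proj, polDeriv_fun_add p (contDiff_const.mul hf) (hproj.mul hf'),
      polDeriv_fun_const_mul p _ hf, hp hf', pderiv_mul, polDeriv_add, polDeriv_mul_X _ j hf,
      pderiv_X_eq_C, Pi.single_comm, mul_comm p, ← smul_eq_C_mul, polDeriv_smul]
    ring

theorem polyApply_eq_constr :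
    polyApply q p = (basisMonomials (Fin n) ℝ).constr ℝ (fun m => polyMultiDeriv m p) q :=
  (basisMonomials_constr_apply _ q).symm

theorem polyApply_mem_Wspace : polyApply q p ∈ Wspace p :=
  Submodule.sum_smul_mem _ _ fun m _ => Submodule.subset_span (Set.mem_range_self m)

theorem polDeriv_eval_mul_zero (hf : ContDiff ℝ ∞ f) :
    polDeriv p (fun y => eval y q * f y) 0 = polDeriv (polyApply q p) f 0 := by
  induction q using MvPolynomial.induction_on generalizing p f with
  | C c =>
    simp only [eval_C, polDeriv_fun_const_mul p c hf, polyApply_eq_constr,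
      basisMonomials_constr_C, polyMultiDeriv_zero, polDeriv_smul]
  | add q r hq hr =>
    simp only [map_add, add_mul]
    rw [polDeriv_fun_add p ((contDiff_eval q).mul hf) ((contDiff_eval r).mul hf), hq p hf, hr p hf,
      ← polDeriv_add]
    simp only [polyApply_eq_constr, map_add]
  | mul_X q i hq =>
    calc polDeriv p (fun y => eval y (q * X i) * f y) 0
        = polDeriv p (fun y => y i * (eval y q * f y)) 0 := by
          congr 1; funext y; rw [map_mul, eval_X]; ring
      _ = polDeriv (pderiv i p) (fun y => eval y q * f y) 0 := by
          rw [polDeriv_proj_mul p i ((contDiff_eval q).mul hf), Pi.zero_apply, zero_mul, zero_add]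
      _ = polDeriv (polyApply q (pderiv i p)) f 0 := hq _ hf
      _ = polDeriv (polyApply (q * X i) p) f 0 := by
          simp only [polyApply_eq_constr, basisMonomials_constr_mul_X, polyMultiDeriv_add_single]

end DifferentialOperators

section Leibniz

variable (p : MvPolynomial (Fin n) ℝ)

theorem exists_polDeriv_mul_eq_mul_eval (hg : ContDiff ℝ ∞ g) :
    ∃ q : MvPolynomial (Fin n) ℝ, ∀ f : (Fin n → ℝ) → ℝ, ContDiff ℝ ∞ f →
      polDeriv p (fun y => f y * g y) 0 = polDeriv p (fun y => f y * eval y q) 0 := by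
  classical
  obtain ⟨q, hq⟩ := exists_multiDerivFun_eval_zero_eq (p.support.biUnion Finset.Iic)
    (fun m => multiDerivFun m g 0)
  refine ⟨q, fun f hf => Finset.sum_congr rfl fun m hm => ?_⟩
  rw [multiDerivFun_fun_mul_congr m hf hg (contDiff_eval q) fun k hk =>
    (hq k (Finset.mem_biUnion.2 ⟨m, hm, Finset.mem_Iic.2 hk⟩)).symm]

theorem exists_mem_Wspace_polDeriv_mul_zero (hg : ContDiff ℝ ∞ g) :
    ∃ w ∈ Wspace p, ∀ f : (Fin n → ℝ) → ℝ, ContDiff ℝ ∞ f →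
      polDeriv p (fun y => f y * g y) 0 = polDeriv w f 0 := by
  obtain ⟨q, hq⟩ := exists_polDeriv_mul_eq_mul_eval p hg
  refine ⟨polyApply q p, polyApply_mem_Wspace p q, fun f hf => ?_⟩
  rw [hq f hf, ← polDeriv_eval_mul_zero p q hf]
  simp only [mul_comm]

variable {ι : Type*} [Fintype ι] [DecidableEq ι] {b : ι → MvPolynomial (Fin n) ℝ}

theorem eq_sum_fischer_smul (hborth : ∀ i j, fischer (b i) (b j) = if i = j then 1 else 0)
    {w : MvPolynomial (Fin n) ℝ} (hw : w ∈ Submodule.span ℝ (Set.range b)) :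
    w = ∑ i, fischer w (b i) • b i := by
  obtain ⟨c, rfl⟩ := (Submodule.mem_span_range_iff_exists_fun ℝ).1 hw
  refine Finset.sum_congr rfl fun i _ => ?_
  congr 1
  calc c i = ∑ j, c j * fischer (b j) (b i) := by simp [hborth]
    _ = fischer (∑ j, c j • b j) (b i) := (polDeriv_sum_smul _ _ _ _ _).symm

theorem polDeriv_mul_zero_eq_sum (hbspan : Wspace p ≤ Submodule.span ℝ (Set.range b))
    (hborth : ∀ i j, fischer (b i) (b j) = if i = j then 1 else 0)
    (hf : ContDiff ℝ ∞ f) (hg : ContDiff ℝ ∞ g) :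
    polDeriv p (fun y => f y * g y) 0 =
      ∑ i, polDeriv p (fun y => eval y (b i) * g y) 0 * polDeriv (b i) f 0 := by
  obtain ⟨w, hwp, hw⟩ := exists_mem_Wspace_polDeriv_mul_zero p hg
  rw [hw f hf, eq_sum_fischer_smul hborth (hbspan hwp), polDeriv_sum_smul]
  exact Finset.sum_congr rfl fun i _ => by rw [hw _ (contDiff_eval _), ← fischer]

theorem generalized_leibniz_second_form_general
    (hbspan : Wspace p ≤ Submodule.span ℝ (Set.range b))
    (hborth : ∀ i j, fischer (b i) (b j) = if i = j then 1 else 0)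
    (hf : ContDiff ℝ ∞ f) (hg : ContDiff ℝ ∞ g) (x : Fin n → ℝ) :
    polDeriv p (fun y => f y * g y) x =
      ∑ i, ∑ j, fischer p (b i * b j) * (polDeriv (b i) f x * polDeriv (b j) g x) := by
  have hadd : ContDiff ℝ ∞ fun y : Fin n → ℝ => x + y := contDiff_const.add contDiff_id
  have hF : ContDiff ℝ ∞ fun y => f (x + y) := hf.comp hadd
  have hG : ContDiff ℝ ∞ fun y => g (x + y) := hg.comp hadd
  have at_zero (q : MvPolynomial (Fin n) ℝ) {u : (Fin n → ℝ) → ℝ} (hu : ContDiff ℝ ∞ u) :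
      polDeriv q u x = polDeriv q (fun y => u (x + y)) 0 := by
    rw [polDeriv_comp_add_left q hu, add_zero]
  rw [at_zero p (hf.mul hg), polDeriv_mul_zero_eq_sum p hbspan hborth hF hG]
  refine Finset.sum_congr rfl fun i _ => ?_
  have expand_g : polDeriv p (fun y => eval y (b i) * g (x + y)) 0 =
      ∑ j, fischer p (b i * b j) * polDeriv (b j) g x := by
    simp only [mul_comm (eval _ (b i)), mul_comm (b i),
      polDeriv_mul_zero_eq_sum p hbspan hborth hG (contDiff_eval (b i)), at_zero _ hg, fischer,
      map_mul]
  rw [expand_g, at_zero _ hf, Finset.sum_mul]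
  exact Finset.sum_congr rfl fun j _ => by ring

end Leibniz

end

/-- Generalized Leibniz formula, second form. -/
theorem generalized_leibniz_second_form
    (n : ℕ) (hn : 1 ≤ n) (p : MvPolynomial (Fin n) ℝ)
    (ρ : ℕ) (hρ : ρ = Module.finrank ℝ (Wspace p))
    (b : Fin ρ → MvPolynomial (Fin n) ℝ)
    (hbmem : ∀ j, b j ∈ Wspace p)
    (hbspan : Wspace p ≤ Submodule.span ℝ (Set.range b))
    (hborth : ∀ i j, fischer (b i) (b j) = if i = j then 1 else 0)
    (f g : (Fin n → ℝ) → ℝ) (hf : ContDiff ℝ (⊤ : ℕ∞) f) (hg : ContDiff ℝ (⊤ : ℕ∞) g)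
    (x : Fin n → ℝ) :
    polDeriv p (fun y => f y * g y) x
      = ∑ i : Fin ρ, ∑ j : Fin ρ,
          fischer p (b i * b j) * (polDeriv (b i) f x * polDeriv (b j) g x) :=
  generalized_leibniz_second_form_general p hbspan hborth hf hg x
end
end

section
/- Bernstein identity for the quadratic form of signature (p,q) (the case V = ℝ^{p,q} of the Bernstein identities of Section 2, with the standard d'Alembertian normalization): Let s ∈ ℂ and ε ∈ {+,−}. Then at every x ∈ ℝⁿ with P(x) ≠ 0, P(∂/∂x)[ P(x)^{s,ε} ] = 2s(2s + n − 2) · P(x)^{s−1,−ε}. -/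
noncomputable section

/-- `εᵢ`: the sign of the `i`-th coordinate for the quadratic form of signature `(p,q)`. -/
def sgn (p : ℕ) {n : ℕ} (i : Fin n) : ℝ := if (i : ℕ) < p then 1 else -1

/-- The quadratic form `P(x) = x₁²+⋯+x_p² − x_{p+1}²−⋯−x_n²` on `ℝⁿ`, `n = p+q`. -/
def Pform (p : ℕ) {n : ℕ} (x : Fin n → ℝ) : ℝ := ∑ i, sgn p i * x i ^ 2

/-- The associated symmetric bilinear form `P(x,y) = Σ_{i≤p} xᵢyᵢ − Σ_{i>p} xᵢyᵢ`. -/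
def Pbil (p : ℕ) {n : ℕ} (x y : Fin n → ℝ) : ℝ := ∑ i, sgn p i * x i * y i

/-- Signed power `t^{s,ε}`: `t^{s,+} = |t|^s = exp(s·log|t|)` and `t^{s,−} = sign(t)·|t|^s`. -/
def sPow (ε : Bool) (s : ℂ) (t : ℝ) : ℂ :=
  (if ε then 1 else (Real.sign t : ℂ)) * Complex.exp (s * (Real.log |t| : ℂ))

/-- Partial derivative `∂/∂xᵢ` of a complex-valued function on `ℝⁿ`. -/
def pd {n : ℕ} (i : Fin n) (f : (Fin n → ℝ) → ℂ) : (Fin n → ℝ) → ℂ :=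
  fun x => fderiv ℝ f x (Pi.single i 1)

/-- The operator `P(∂/∂x) = Σᵢ εᵢ ∂²/∂xᵢ²`. -/
def Pop (p : ℕ) {n : ℕ} (f : (Fin n → ℝ) → ℂ) : (Fin n → ℝ) → ℂ :=
  fun x => ∑ i, (sgn p i : ℂ) * pd i (pd i f) x

/-!
If `b` is an orthogonal basis for a nondegenerate symmetric bilinear form `B` and `Q x = B x x`, two
applications of the chain rule give
`∂_{bᵢ}² (f ∘ Q) = 2 Q(bᵢ) f'(Q) + 4 B(x, bᵢ)² f''(Q)`.
Dividing by `Q(bᵢ)` and summing, Parseval's identity `∑ B(x, bᵢ)² / Q(bᵢ) = Q x` turns this into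
the radial formula `2 n f'(Q) + 4 Q f''(Q)`. For the signed power `f = t^{s,ε}` each derivative
lowers `s` by one and flips `ε`, so `f' = s t^{s-1,-ε}` and `t f'' = s (s - 1) t^{s-1,-ε}`.
-/

open Filter Topology Module

section SignedPower

theorem eventually_sign_eq {t : ℝ} (ht : t ≠ 0) : ∀ᶠ u in 𝓝 t, Real.sign u = Real.sign t := by
  rcases ht.lt_or_gt with hneg | hpos
  · filter_upwards [eventually_lt_nhds hneg] with u hu
    rw [Real.sign_of_neg hu, Real.sign_of_neg hneg]
  · filter_upwards [eventually_gt_nhds hpos] with u hu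
    rw [Real.sign_of_pos hu, Real.sign_of_pos hpos]

theorem ofReal_mul_sPow_sub_one (ε : Bool) (s : ℂ) {t : ℝ} (ht : t ≠ 0) :
    (t : ℂ) * sPow ε (s - 1) t = sPow (!ε) s t := by
  have exp_eq : Complex.exp (s * (Real.log |t| : ℂ))
      = (|t| : ℝ) * Complex.exp ((s - 1) * (Real.log |t| : ℂ)) := by
    nth_rewrite 2 [← Real.exp_log (abs_pos.mpr ht)]
    rw [Complex.ofReal_exp, ← Complex.exp_add]
    ring_nf
  rw [sPow, sPow, exp_eq]
  rcases ht.lt_or_gt with hneg | hpos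
  · cases ε <;> simp [Real.sign_of_neg hneg, abs_of_neg hneg]
  · cases ε <;> simp [Real.sign_of_pos hpos, abs_of_pos hpos]

theorem hasDerivAt_sPow (ε : Bool) (s : ℂ) {t : ℝ} (ht : t ≠ 0) :
    HasDerivAt (sPow ε s) (s * sPow (!ε) (s - 1) t) t := by
  have hlog : HasDerivAt (fun u : ℝ => Real.log |u|) t⁻¹ t := by
    simpa only [Real.log_abs] using Real.hasDerivAt_log ht
  have hexp := (hlog.ofReal_comp.const_mul s).cexp.const_mul
    (if ε then 1 else (Real.sign t : ℂ))
  have sign_const : sPow ε s =ᶠ[𝓝 t] fun u =>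
      (if ε then 1 else (Real.sign t : ℂ)) * Complex.exp (s * (Real.log |u| : ℂ)) := by
    filter_upwards [eventually_sign_eq ht] with u hu
    rw [sPow, hu]
  refine (hexp.congr_of_eventuallyEq sign_const).congr_deriv ?_
  have ht' : (t : ℂ) ≠ 0 := Complex.ofReal_ne_zero.mpr ht
  have sPow_eq : sPow ε s t = t * sPow (!ε) (s - 1) t := by
    rw [ofReal_mul_sPow_sub_one _ _ ht, Bool.not_not]
  calc (if ε then 1 else (Real.sign t : ℂ)) *
        (Complex.exp (s * (Real.log |t| : ℂ)) * (s * ((t⁻¹ : ℝ) : ℂ)))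
      = s * (t : ℂ)⁻¹ * sPow ε s t := by rw [sPow, Complex.ofReal_inv]; ring
    _ = s * sPow (!ε) (s - 1) t := by rw [sPow_eq]; field_simp

end SignedPower

section OrthogonalBasis

theorem isSymm_of_iIsOrtho {R M ι : Type*} [CommRing R] [AddCommGroup M] [Module R M]
    {B : LinearMap.BilinForm R M} {b : Basis ι R M} (hb : B.iIsOrtho b) : B.IsSymm := by
  have flip_eq : B = B.flip := LinearMap.BilinForm.ext_basis b fun i j => by
    rw [LinearMap.BilinForm.flip_apply]
    rcases eq_or_ne i j with rfl | hij
    · rfl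
    · rw [LinearMap.BilinForm.iIsOrtho_def.1 hb i j hij,
        LinearMap.BilinForm.iIsOrtho_def.1 hb j i hij.symm]
  exact ⟨fun x y => LinearMap.congr_fun₂ flip_eq x y⟩

theorem apply_basis_of_iIsOrtho {R M ι : Type*} [CommRing R] [AddCommGroup M] [Module R M]
    {B : LinearMap.BilinForm R M} {b : Basis ι R M} (hb : B.iIsOrtho b) (x : M) (i : ι) :
    B x (b i) = b.repr x i * B (b i) (b i) := by
  have functional_eq : B.flip (b i) = B (b i) (b i) • b.coord i := b.ext fun j => by
    rcases eq_or_ne j i with rfl | hji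
    · simp
    · simp [LinearMap.BilinForm.iIsOrtho_def.1 hb j i hji, hji]
  simpa [mul_comm] using LinearMap.congr_fun functional_eq x

theorem sum_inv_mul_apply_basis_sq {K V ι : Type*} [Field K] [AddCommGroup V] [Module K V]
    [Fintype ι] {B : LinearMap.BilinForm K V} {b : Basis ι K V} (hb : B.iIsOrtho b)
    (x : V) :
    ∑ i, (B (b i) (b i))⁻¹ * B x (b i) ^ 2 = B x x := by
  calc ∑ i, (B (b i) (b i))⁻¹ * B x (b i) ^ 2
      = ∑ i, b.repr x i * B x (b i) := Finset.sum_congr rfl fun i _ => by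
        rw [apply_basis_of_iIsOrtho hb x i]
        field_simp
    _ = B x (∑ i, b.repr x i • b i) := by simp only [map_sum, map_smul, smul_eq_mul]
    _ = B x x := by rw [b.sum_repr]

end OrthogonalBasis

section QuadraticForm

variable {E F : Type*} [NormedAddCommGroup E] [NormedSpace ℝ E]
  [NormedAddCommGroup F] [NormedSpace ℝ F] {B : E →L[ℝ] E →L[ℝ] ℝ}

theorem hasFDerivAt_bilin_self (hB : B.toBilinForm.IsSymm) (x : E) :
    HasFDerivAt (fun y => B y y) ((2 : ℝ) • B x) x := by
  refine (B.hasFDerivAt.clm_apply (hasFDerivAt_id x)).congr_fderiv ?_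
  ext v
  simp [show B v x = B x v from hB.eq v x, two_mul]

theorem hasFDerivAt_comp_bilin_self (hB : B.toBilinForm.IsSymm) {f : ℝ → F} {f' : F} {x : E}
    (hf : HasDerivAt f f' (B x x)) :
    HasFDerivAt (fun y => f (B y y)) (((2 : ℝ) • B x).smulRight f') x :=
  (HasFDerivAt.comp (f := fun y => B y y) x hf.hasFDerivAt
    (hasFDerivAt_bilin_self hB x)).congr_fderiv (by ext v; simp [smul_smul])

theorem fderiv_fderiv_comp_bilin_self (hB : B.toBilinForm.IsSymm) {f f' : ℝ → F} {f'' : F}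
    {x : E} (hf : ∀ᶠ t in 𝓝 (B x x), HasDerivAt f (f' t) t) (hf' : HasDerivAt f' f'' (B x x))
    (v : E) :
    fderiv ℝ (fun y => fderiv ℝ (fun z => f (B z z)) y v) x v
      = (2 * B v v) • f' (B x x) + (4 * B x v ^ 2) • f'' := by
  have first_deriv : (fun y => fderiv ℝ (fun z => f (B z z)) y v)
      =ᶠ[𝓝 x] fun y => (2 * B y v) • f' (B y y) := by
    filter_upwards [(hasFDerivAt_bilin_self hB x).continuousAt.eventually hf] with y hy
    rw [(hasFDerivAt_comp_bilin_self hB hy).fderiv]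
    simp
  have coeff_deriv : HasFDerivAt (fun y => 2 * B y v) ((2 : ℝ) • B.flip v) x :=
    (B.flip v).hasFDerivAt.const_mul 2
  rw [first_deriv.fderiv_eq,
    (coeff_deriv.fun_smul (hasFDerivAt_comp_bilin_self hB hf')).fderiv]
  simp only [add_apply, smul_apply,
    ContinuousLinearMap.smulRight_apply, ContinuousLinearMap.flip_apply, smul_eq_mul, smul_smul]
  module

variable {ι : Type*} [Fintype ι]

/-- The second-order operator `∑ᵢ B(bᵢ, bᵢ)⁻¹ ∂_{bᵢ}²`: for an orthogonal basis `b`, the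
Laplacian (d'Alembertian) dual to the form `B`. The basis vectors need not be normalized, whence
the factors `B(bᵢ, bᵢ)⁻¹`. -/
def bilinLaplacian (B : E →L[ℝ] E →L[ℝ] ℝ) (b : Basis ι ℝ E) (f : E → F) (x : E) : F :=
  ∑ i, (B (b i) (b i))⁻¹ • fderiv ℝ (fun y => fderiv ℝ f y (b i)) x (b i)

theorem bilinLaplacian_comp_bilin_self {b : Basis ι ℝ E}
    (hb : B.toBilinForm.iIsOrtho b) (hb₀ : ∀ i, B (b i) (b i) ≠ 0)
    {f f' : ℝ → F} {f'' : F} {x : E}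
    (hf : ∀ᶠ t in 𝓝 (B x x), HasDerivAt f (f' t) t) (hf' : HasDerivAt f' f'' (B x x)) :
    bilinLaplacian B b (fun y => f (B y y)) x
      = (2 * Fintype.card ι : ℝ) • f' (B x x) + (4 * B x x) • f'' := by
  have hB : B.toBilinForm.IsSymm := isSymm_of_iIsOrtho hb
  have parseval : ∑ i, (B (b i) (b i))⁻¹ * B x (b i) ^ 2 = B x x :=
    sum_inv_mul_apply_basis_sq hb x
  have term (i : ι) :
      (B (b i) (b i))⁻¹ • fderiv ℝ (fun y => fderiv ℝ (fun z => f (B z z)) y (b i)) x (b i)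
        = (2 : ℝ) • f' (B x x) + (4 * ((B (b i) (b i))⁻¹ * B x (b i) ^ 2)) • f'' := by
    rw [fderiv_fderiv_comp_bilin_self hB hf hf', smul_add, smul_smul, smul_smul]
    congr 2
    · field_simp [hb₀ i]
    · ring
  simp only [bilinLaplacian, term, Finset.sum_add_distrib, Finset.sum_const, Finset.card_univ,
    ← Finset.sum_smul, ← Finset.mul_sum, parseval]
  rw [← Nat.cast_smul_eq_nsmul ℝ, smul_smul, mul_comm (Fintype.card ι : ℝ)]

theorem bernstein_identity_Rpq_general {b : Basis ι ℝ E}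
    (hb : B.toBilinForm.iIsOrtho b) (hb₀ : ∀ i, B (b i) (b i) ≠ 0)
    (s : ℂ) (ε : Bool) {x : E} (hx : B x x ≠ 0) :
    bilinLaplacian B b (fun y => sPow ε s (B y y)) x
      = 2 * s * (2 * s + (Fintype.card ι : ℂ) - 2) * sPow (!ε) (s - 1) (B x x) := by
  have hf : ∀ᶠ t in 𝓝 (B x x), HasDerivAt (sPow ε s) (s * sPow (!ε) (s - 1) t) t :=
    (eventually_ne_nhds hx).mono fun _ => hasDerivAt_sPow ε s
  have hf' := (hasDerivAt_sPow (!ε) (s - 1) hx).const_mul s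
  rw [bilinLaplacian_comp_bilin_self hb hb₀ hf hf', Complex.real_smul, Complex.real_smul,
    Bool.not_not]
  push_cast
  linear_combination 4 * s * (s - 1) * ofReal_mul_sPow_sub_one ε (s - 1) hx

end QuadraticForm

section Signature

variable (p : ℕ) {n : ℕ}

/-- The bilinear form `Pbil p` as a continuous bilinear map. -/
def pbilCLM : (Fin n → ℝ) →L[ℝ] (Fin n → ℝ) →L[ℝ] ℝ :=
  ∑ i, sgn p i • (ContinuousLinearMap.proj i : (Fin n → ℝ) →L[ℝ] ℝ).smulRight
    (ContinuousLinearMap.proj i : (Fin n → ℝ) →L[ℝ] ℝ)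

theorem pbilCLM_apply (x y : Fin n → ℝ) : pbilCLM p x y = Pbil p x y := by
  simp [pbilCLM, Pbil, mul_assoc]

theorem pbilCLM_self (x : Fin n → ℝ) : pbilCLM p x x = Pform p x := by
  simp only [pbilCLM_apply, Pbil, Pform, mul_assoc, sq]

theorem pbilCLM_basisFun (i j : Fin n) :
    pbilCLM p (Pi.basisFun ℝ (Fin n) i) (Pi.basisFun ℝ (Fin n) j)
      = if i = j then sgn p i else 0 := by
  rcases eq_or_ne i j with rfl | hij
  · simp [pbilCLM_apply, Pbil, Pi.single_apply]
  · simp [pbilCLM_apply, Pbil, Pi.single_apply, hij, hij.symm]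

theorem iIsOrtho_basisFun_pbilCLM :
    (pbilCLM p (n := n)).toBilinForm.iIsOrtho (Pi.basisFun ℝ (Fin n)) :=
  LinearMap.BilinForm.iIsOrtho_def.2 fun i j hij => by
    rw [ContinuousLinearMap.toBilinForm_apply, pbilCLM_basisFun, if_neg hij]

theorem sgn_ne_zero (i : Fin n) : sgn p i ≠ 0 := by
  unfold sgn
  split_ifs <;> norm_num

theorem pbilCLM_basisFun_self_ne_zero (i : Fin n) :
    pbilCLM p (Pi.basisFun ℝ (Fin n) i) (Pi.basisFun ℝ (Fin n) i) ≠ 0 := by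
  simpa only [pbilCLM_basisFun, if_true] using sgn_ne_zero p i

theorem inv_sgn (i : Fin n) : (sgn p i)⁻¹ = sgn p i := by
  unfold sgn
  split_ifs <;> norm_num

theorem Pop_eq_bilinLaplacian (f : (Fin n → ℝ) → ℂ) (x : Fin n → ℝ) :
    Pop p f x = bilinLaplacian (pbilCLM p) (Pi.basisFun ℝ (Fin n)) f x := by
  simp only [bilinLaplacian, pbilCLM_basisFun, if_true, inv_sgn, Complex.real_smul]
  simp only [Pi.basisFun_apply]
  rfl

end Signature

/-- Bernstein identity for the quadratic form of signature `(p,q)`: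
`P(∂/∂x)[P(x)^{s,ε}] = 2s(2s+n−2)·P(x)^{s−1,−ε}` on `{P(x) ≠ 0}`. -/
theorem bernstein_identity_Rpq (p q : ℕ) (hp : 1 ≤ p) (n : ℕ) (hn : n = p + q)
    (s : ℂ) (ε : Bool) (x : Fin n → ℝ) (hx : Pform p x ≠ 0) :
    Pop p (fun y => sPow ε s (Pform p y)) x
      = 2 * s * (2 * s + (n : ℂ) - 2) * sPow (!ε) (s - 1) (Pform p x) := by
  rw [← pbilCLM_self] at hx
  simpa only [Pop_eq_bilinLaplacian, pbilCLM_self, Fintype.card_fin] using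
    bernstein_identity_Rpq_general (iIsOrtho_basisFun_pbilCLM p)
      (pbilCLM_basisFun_self_ne_zero p) s ε hx
end
end
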